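/- Let θ ∈ (0, 1/2), let P = P_{T,θ} on {0,1}³ for the tree T with edge set {{1,2},{2,3}}, and let x_1,…,x_n be i.i.d. samples from P. Define K(θ) := −log(1 − θ·(1 − √(4θ(1−θ)))), σ² := θ·√(4θ(1−θ))·e^{K(θ)}, z := √(θ/(1−θ)), f̃(n) := (e^{−n·K(θ)}/√(2πσ²n))·[1 + (1−3σ²)/(8σ²n)], and f(n) := (f̃(n)/(1−z))·[1 − z(1+z)/(2(1−z)²σ²n)]. Then ℙ(Â_{1,3} ≥ Â_{1,2}) = f(n)·(1 + o(n^{−1})); that is, n·( ℙ(Â_{1,3} ≥ Â_{1,2}) / f(n) − 1 ) → 0 as n → ∞. -/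

import Mathlib

open scoped Classical BigOperators
open Filter

noncomputable section

/-- Symmetric pair weight `w(x i, x j)` lifted to unordered pairs. -/
def pairWeight (θ : ℝ) {p : ℕ} (x : Fin p → Bool) : Sym2 (Fin p) → ℝ :=
  Sym2.lift ⟨fun i j => if x i = x j then 1 - θ else θ, fun i j => by
    dsimp only
    by_cases h : x i = x j
    · rw [if_pos h, if_pos h.symm]
    · rw [if_neg h, if_neg (fun hh => h hh.symm)]⟩

/-- The homogeneous zero-external-field Ising tree distribution. -/
def isingP (θ : ℝ) {p : ℕ} (T : SimpleGraph (Fin p)) (x : Fin p → Bool) : ℝ :=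
  (1 / 2) * ∏ e ∈ T.edgeFinset, pairWeight θ x e

/-- Probability of an event `A` about `n` i.i.d. samples from pmf `P`. -/
def iidProb {p : ℕ} (P : (Fin p → Bool) → ℝ) (n : ℕ)
    (A : Set (Fin n → Fin p → Bool)) : ℝ :=
  ∑ xs : Fin n → Fin p → Bool, if xs ∈ A then ∏ k, P (xs k) else 0

/-- Empirical agreement weight. -/
def Ahat {p n : ℕ} (xs : Fin n → Fin p → Bool) (i j : Fin p) : ℝ :=
  ((Finset.univ.filter (fun k : Fin n => xs k i = xs k j)).card : ℝ) / n

/-- Empirical agreement weight on unordered pairs. -/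
def AhatSym {p n : ℕ} (xs : Fin n → Fin p → Bool) : Sym2 (Fin p) → ℝ :=
  Sym2.lift ⟨fun i j => Ahat xs i j, fun i j => by
    have h : (Finset.univ.filter fun k : Fin n => xs k i = xs k j)
        = (Finset.univ.filter fun k : Fin n => xs k j = xs k i) :=
      Finset.filter_congr (fun k _ => ⟨Eq.symm, Eq.symm⟩)
    simp only [Ahat, h]⟩

/-- The path (Markov chain) tree on 3 nodes with edges {1,2},{2,3}. -/
def chainA : SimpleGraph (Fin 3) := SimpleGraph.fromEdgeSet {s(0,1), s(1,2)}

def chainB : SimpleGraph (Fin 3) := SimpleGraph.fromEdgeSet {s(0,2), s(1,2)}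

def chainC : SimpleGraph (Fin 3) := SimpleGraph.fromEdgeSet {s(0,1), s(0,2)}

def path4 : SimpleGraph (Fin 4) := SimpleGraph.fromEdgeSet {s(0,1), s(1,2), s(2,3)}

def Kexp (θ : ℝ) : ℝ := -Real.log (1 - θ * (1 - Real.sqrt (4 * θ * (1 - θ))))

def sigmaSq (θ : ℝ) : ℝ := θ * Real.sqrt (4 * θ * (1 - θ)) * Real.exp (Kexp θ)

def zTheta (θ : ℝ) : ℝ := Real.sqrt (θ / (1 - θ))

def ftilde (θ : ℝ) (n : ℕ) : ℝ :=
  Real.exp (-(n : ℝ) * Kexp θ) / Real.sqrt (2 * Real.pi * sigmaSq θ * n)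
    * (1 + (1 - 3 * sigmaSq θ) / (8 * sigmaSq θ * n))

def fn (θ : ℝ) (n : ℕ) : ℝ :=
  ftilde θ n / (1 - zTheta θ)
    * (1 - zTheta θ * (1 + zTheta θ) / (2 * (1 - zTheta θ) ^ 2 * sigmaSq θ * n))

/-- Hamming distance. -/
def hamming {p : ℕ} (x y : Fin p → Bool) : ℕ :=
  (Finset.univ.filter (fun i => x i ≠ y i)).card

/-- Noisy (BSC with crossover probability q) version of a distribution. -/
def noisy (q : ℝ) {p : ℕ} (P : (Fin p → Bool) → ℝ) (y : Fin p → Bool) : ℝ :=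
  ∑ x : Fin p → Bool, q ^ hamming x y * (1 - q) ^ (p - hamming x y) * P x

def beta1 (θ q : ℝ) : ℝ :=
  ((1 - q) ^ 3 + q ^ 3) * (θ * (1 - θ) / 2) + q * (1 - q) * ((1 - θ * (1 - θ)) / 2)

def beta2 (θ q : ℝ) : ℝ :=
  ((1 - q) ^ 3 + q ^ 3) * (θ ^ 2 / 2) + q * (1 - q) * ((1 - θ ^ 2) / 2)

def Kq (θ q : ℝ) : ℝ :=
  -Real.log (1 - 4 * ((beta1 θ q + beta2 θ q) / 2 - Real.sqrt (beta1 θ q * beta2 θ q)))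

def mu2 (θ q : ℝ) : ℝ := 4 * Real.sqrt (beta1 θ q * beta2 θ q) * Real.exp (Kq θ q)

def zq (θ q : ℝ) : ℝ := Real.sqrt (beta2 θ q / beta1 θ q)

def ftildeq (θ q : ℝ) (n : ℕ) : ℝ :=
  Real.exp (-(n : ℝ) * Kq θ q) / Real.sqrt (2 * Real.pi * mu2 θ q * n)
    * (1 + (1 - 3 * mu2 θ q) / (8 * mu2 θ q * n))

def fnq (θ q : ℝ) (n : ℕ) : ℝ :=
  ftildeq θ q n / (1 - zq θ q)
    * (1 - zq θ q * (1 + zq θ q) / (2 * (1 - zq θ q) ^ 2 * mu2 θ q * n))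

/-- Marginal of a pmf on `{0,1}^p` on a single coordinate. -/
def marg1 {p : ℕ} (Q : (Fin p → Bool) → ℝ) (i : Fin p) (a : Bool) : ℝ :=
  ∑ x ∈ Finset.univ.filter (fun x : Fin p → Bool => x i = a), Q x

/-- Marginal of a pmf on `{0,1}^p` on a pair of coordinates. -/
def marg2 {p : ℕ} (Q : (Fin p → Bool) → ℝ) (i j : Fin p) (a b : Bool) : ℝ :=
  ∑ x ∈ Finset.univ.filter (fun x : Fin p → Bool => x i = a ∧ x j = b), Q x

/-- Kullback-Leibler divergence between pmfs on a finite type. -/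
def klDiv {X : Type*} [Fintype X] (Q P : X → ℝ) : ℝ :=
  ∑ x : X, Q x * Real.log (Q x / P x)

/-- Empirical mutual information between coordinates `i` and `j`. -/
def mutInf {p : ℕ} (Q : (Fin p → Bool) → ℝ) (i j : Fin p) : ℝ :=
  ∑ a : Bool, ∑ b : Bool,
    marg2 Q i j a b * Real.log (marg2 Q i j a b / (marg1 Q i a * marg1 Q j b))

end

/-!
The event `Â_{1,2} ≤ Â_{1,3}` says that a random walk with steps in `{-1, 0, 1}` is nonnegative at
time `n`. Since `∮ w ^ m / (w - 1)` over a circle of radius greater than `1` is `2πi` or `0`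
according to whether `0 ≤ m`, its probability is `(2πi)⁻¹ ∮ G(w) ^ n / (w - 1) dw`, where `G` is the
generating function of a step. On the saddle point circle `|w| = 1 / z` the walk is exponentially
tilted to a symmetric lazy walk, `G(ζ / z) = exp (-K) * (1 - σ² + σ² / 2 * (ζ + ζ⁻¹))`, so that the
probability is
`exp (-nK) / (2π) * ∫ t in -π..π, (1 - σ² (1 - cos t)) ^ n * Re (1 - z * exp (-it))⁻¹`.
Substituting `t = u / √n`, the difference between the integrand and its Gaussian limit, multiplied
by `n`, converges pointwise and is dominated by a polynomial times a Gaussian; the second and fourth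
Gaussian moments then give the correction of order `1 / n`.
-/

section Limits

open Asymptotics Real Topology

variable {ι : Type*} {l : Filter ι}

lemma tendsto_mul_comp_of_isLittleO_pow {f : ℝ → ℝ} {a L : ℝ} {k : ℕ} {c τ : ι → ℝ}
    (hf : (fun t => f t - a * t ^ k) =o[𝓝 0] fun t => t ^ k) (hτ : Tendsto τ l (𝓝 0))
    (hc : Tendsto (fun i => c i * τ i ^ k) l (𝓝 L)) :
    Tendsto (fun i => c i * f (τ i)) l (𝓝 (a * L)) := by
  have hrem : Tendsto (fun i => c i * (f (τ i) - a * τ i ^ k)) l (𝓝 0) :=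
    (isLittleO_one_iff ℝ).mp
      (((isBigO_refl c l).mul_isLittleO (hf.comp_tendsto hτ)).trans_isBigO (hc.isBigO_one ℝ))
  have hsum := hrem.add (hc.const_mul a)
  rw [zero_add] at hsum
  exact hsum.congr fun i => by ring

lemma mul_sub_mul_pow_isLittleO {f h : ℝ → ℝ} {a : ℝ} {k : ℕ} (hh : ContinuousAt h 0)
    (hf : (fun t => f t - a * t ^ k) =o[𝓝 0] fun t => t ^ k) :
    (fun t => h t * f t - h 0 * a * t ^ k) =o[𝓝 0] fun t => t ^ k := by
  have hh0 : (fun t => h t - h 0) =o[𝓝 0] fun _ => (1 : ℝ) :=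
    (isLittleO_one_iff ℝ).mpr (tendsto_sub_nhds_zero_iff.mpr hh)
  have hfirst : (fun t => h t * (f t - a * t ^ k)) =o[𝓝 0] fun t => t ^ k := by
    simpa using (hh.tendsto.isBigO_one ℝ).mul_isLittleO hf
  have hsecond : (fun t => (h t - h 0) * (a * t ^ k)) =o[𝓝 0] fun t => t ^ k := by
    simpa using hh0.mul_isBigO (isBigO_const_mul_self a (fun t : ℝ => t ^ k) (𝓝 0))
  exact (hfirst.add hsecond).congr_left fun t => by ring

lemma isBigO_pow_of_sub_isLittleO {f : ℝ → ℝ} {a : ℝ} {k : ℕ}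
    (hf : (fun t => f t - a * t ^ k) =o[𝓝 0] fun t => t ^ k) : f =O[𝓝 0] fun t => t ^ k := by
  simpa using hf.isBigO.add (isBigO_const_mul_self a (fun t : ℝ => t ^ k) (𝓝 0))

lemma exists_forall_abs_le_mul_abs_pow {f : ℝ → ℝ} {B : ℝ} {k : ℕ}
    (hB : ∀ t, |f t| ≤ B) (hf : f =O[𝓝 0] fun t => t ^ k) :
    ∃ C, ∀ t, |f t| ≤ C * |t| ^ k := by
  obtain ⟨A, hA, hfA⟩ := hf.exists_nonneg
  obtain ⟨δ, hδ, hball⟩ := Metric.eventually_nhds_iff.mp hfA.bound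
  have hB0 : 0 ≤ B := (abs_nonneg _).trans (hB 0)
  refine ⟨A + B / δ ^ k, fun t => ?_⟩
  rcases lt_or_ge |t| δ with hnear | hfar
  · calc |f t| ≤ A * |t| ^ k := by
          simpa [norm_eq_abs, abs_pow] using hball (by simpa [dist_eq] using hnear)
      _ ≤ (A + B / δ ^ k) * |t| ^ k := by gcongr; linarith [show 0 ≤ B / δ ^ k by positivity]
  · calc |f t| ≤ B / δ ^ k * δ ^ k := by rw [div_mul_cancel₀ _ (by positivity)]; exact hB t
      _ ≤ (A + B / δ ^ k) * |t| ^ k := by gcongr; linarith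

lemma tendsto_zero_of_tendsto_mul {c y : ι → ℝ} {L : ℝ} (hc : Tendsto c l atTop)
    (hcy : Tendsto (fun i => c i * y i) l (𝓝 L)) : Tendsto y l (𝓝 0) := by
  have hlim := hc.inv_tendsto_atTop.mul hcy
  rw [zero_mul] at hlim
  refine hlim.congr' ?_
  filter_upwards [hc.eventually_ne_atTop 0] with i hi
  exact inv_mul_cancel_left₀ hi (y i)

lemma tendsto_mul_div_sub_one {c X Y : ι → ℝ} {L : ℝ} (hc : Tendsto c l atTop)
    (hX : Tendsto (fun i => c i * (X i - 1)) l (𝓝 L))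
    (hY : Tendsto (fun i => c i * (Y i - 1)) l (𝓝 L)) :
    Tendsto (fun i => c i * (X i / Y i - 1)) l (𝓝 0) := by
  have hY1 : Tendsto Y l (𝓝 1) := by
    simpa using (tendsto_zero_of_tendsto_mul hc hY).add_const 1
  have hlim := (hX.sub hY).div hY1 one_ne_zero
  rw [sub_self, zero_div] at hlim
  refine hlim.congr' ?_
  filter_upwards [hY1.eventually_ne one_ne_zero] with i hi
  simp only [Pi.div_apply]
  field_simp
  ring

lemma tendsto_natCast_mul_one_add_mul_one_sub_sub_one (α β : ℝ) :
    Tendsto (fun n : ℕ => (n : ℝ) * ((1 + α / n) * (1 - β / n) - 1)) atTop (𝓝 (α - β)) := by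
  have hlim := (tendsto_inv_atTop_nhds_zero_nat (𝕜 := ℝ)).const_mul (α * β) |>.const_sub (α - β)
  rw [mul_zero, sub_zero] at hlim
  refine hlim.congr' ?_
  filter_upwards [eventually_ne_atTop 0] with n hn
  field_simp
  ring

lemma tendsto_natCast_mul_one_add_pow_sub_one {x : ℕ → ℝ} {L : ℝ}
    (hx : Tendsto (fun n : ℕ => (n : ℝ) ^ 2 * x n) atTop (𝓝 L)) :
    Tendsto (fun n : ℕ => (n : ℝ) * ((1 + x n) ^ n - 1)) atTop (𝓝 L) := by
  have hn : Tendsto (fun n : ℕ => (n : ℝ)) atTop atTop := tendsto_natCast_atTop_atTop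
  have hx0 : Tendsto x atTop (𝓝 0) :=
    tendsto_zero_of_tendsto_mul ((tendsto_pow_atTop two_ne_zero).comp hn) hx
  have hlog : Tendsto (fun n : ℕ => (n : ℝ) * (n * log (1 + x n))) atTop (𝓝 L) := by
    simpa [sq, mul_assoc] using
      ((hasDerivAt_log one_ne_zero).hasFDerivAt.hasFDerivWithinAt (s := Set.univ)).lim hx0
        (by simp) hx
  have hexp : Tendsto (fun n : ℕ => (n : ℝ) * (exp (n * log (1 + x n)) - 1)) atTop (𝓝 L) := by
    simpa using ((hasDerivAt_exp 0).hasFDerivAt.hasFDerivWithinAt (s := Set.univ)).lim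
      (tendsto_zero_of_tendsto_mul hn hlog) (by simp) hlog
  refine hexp.congr' ?_
  filter_upwards [hx0.eventually_const_lt neg_one_lt_zero] with n hxn
  rw [exp_nat_mul, exp_log (by linarith)]

end Limits

section Gaussian

open MeasureTheory Real

variable {b : ℝ}

lemma integrable_pow_mul_exp_neg_mul_sq (hb : 0 < b) (k : ℕ) :
    Integrable fun x : ℝ => x ^ k * exp (-b * x ^ 2) := by
  simpa using integrable_rpow_mul_exp_neg_mul_sq hb (s := k) (by linarith [k.cast_nonneg (α := ℝ)])

lemma hasDerivAt_pow_succ_mul_exp_neg_mul_sq (b : ℝ) (k : ℕ) (x : ℝ) :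
    HasDerivAt (fun x : ℝ => x ^ (k + 1) * exp (-b * x ^ 2))
      ((k + 1) * (x ^ k * exp (-b * x ^ 2)) - 2 * b * (x ^ (k + 2) * exp (-b * x ^ 2))) x := by
  have hexp : HasDerivAt (fun x : ℝ => exp (-b * x ^ 2)) (exp (-b * x ^ 2) * (-b * (2 * x))) x := by
    simpa using ((hasDerivAt_pow 2 x).const_mul (-b)).exp
  convert! (hasDerivAt_pow (k + 1) x).mul hexp using 1
  push_cast
  ring

lemma integral_pow_add_two_mul_exp_neg_mul_sq (hb : 0 < b) (k : ℕ) :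
    ∫ x : ℝ, x ^ (k + 2) * exp (-b * x ^ 2) =
      (k + 1) / (2 * b) * ∫ x : ℝ, x ^ k * exp (-b * x ^ 2) := by
  have hint := integrable_pow_mul_exp_neg_mul_sq hb
  have hparts := integral_eq_zero_of_hasDerivAt_of_integrable
    (hasDerivAt_pow_succ_mul_exp_neg_mul_sq b k)
    (((hint k).const_mul _).sub ((hint (k + 2)).const_mul _)) (hint (k + 1))
  rw [integral_sub ((hint k).const_mul _) ((hint (k + 2)).const_mul _),
    integral_const_mul, integral_const_mul] at hparts
  rw [div_mul_eq_mul_div, eq_div_iff (by positivity)]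
  linarith

variable {s : ℝ}

lemma integral_sq_mul_exp_neg_half_mul_sq (hs : 0 < s) :
    ∫ x : ℝ, x ^ 2 * exp (-(s / 2) * x ^ 2) = √(2 * π / s) / s := by
  rw [integral_pow_add_two_mul_exp_neg_mul_sq (half_pos hs) 0]
  simp only [pow_zero, one_mul, integral_gaussian, Nat.cast_zero]
  rw [show π / (s / 2) = 2 * π / s by field_simp]
  field_simp
  ring

lemma integral_pow_four_mul_exp_neg_half_mul_sq (hs : 0 < s) :
    ∫ x : ℝ, x ^ 4 * exp (-(s / 2) * x ^ 2) = 3 * √(2 * π / s) / s ^ 2 := by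
  rw [integral_pow_add_two_mul_exp_neg_mul_sq (half_pos hs) 2,
    integral_sq_mul_exp_neg_half_mul_sq hs]
  push_cast
  field_simp
  ring

end Gaussian

section Laplace

open Asymptotics MeasureTheory Real Topology

variable {φ g : ℝ → ℝ} {s κ g₀ γ : ℝ}

lemma tendsto_div_sqrt_natCast (u : ℝ) :
    Tendsto (fun n : ℕ => u / √(n : ℝ)) atTop (𝓝 0) :=
  (tendsto_sqrt_atTop.comp tendsto_natCast_atTop_atTop).const_div_atTop u

lemma natCast_mul_div_sqrt_sq {n : ℕ} (hn : n ≠ 0) (u : ℝ) :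
    (n : ℝ) * (u / √(n : ℝ)) ^ 2 = u ^ 2 := by
  rw [div_pow, sq_sqrt n.cast_nonneg]
  field_simp

lemma exp_neg_mul_div_sqrt_sq_pow {n : ℕ} (hn : n ≠ 0) (b u : ℝ) :
    exp (-b * (u / √(n : ℝ)) ^ 2) ^ n = exp (-b * u ^ 2) := by
  rw [← exp_nat_mul, ← natCast_mul_div_sqrt_sq hn u]
  ring_nf

lemma tendsto_natCast_mul_pow_div_sqrt_sub_gaussian
    (hφ : (fun t => φ t - exp (-(s / 2) * t ^ 2) - κ * t ^ 4) =o[𝓝 0] fun t => t ^ 4) (u : ℝ) :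
    Tendsto (fun n : ℕ => (n : ℝ) * (φ (u / √(n : ℝ)) ^ n - exp (-(s / 2) * u ^ 2))) atTop
      (𝓝 (κ * u ^ 4 * exp (-(s / 2) * u ^ 2))) := by
  have hτ := tendsto_div_sqrt_natCast u
  have hdiff : Tendsto (fun n : ℕ => (n : ℝ) ^ 2 *
      (φ (u / √(n : ℝ)) - exp (-(s / 2) * (u / √(n : ℝ)) ^ 2))) atTop (𝓝 (κ * u ^ 4)) := by
    refine tendsto_mul_comp_of_isLittleO_pow hφ hτ (tendsto_const_nhds.congr' ?_)
    filter_upwards [eventually_ne_atTop 0] with n hn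
    linear_combination -(n * (u / √(n : ℝ)) ^ 2 + u ^ 2) * natCast_mul_div_sqrt_sq hn u
  have hexp : Tendsto (fun n : ℕ => exp (-(s / 2) * (u / √(n : ℝ)) ^ 2)) atTop (𝓝 1) := by
    have hcont : Continuous fun t : ℝ => exp (-(s / 2) * t ^ 2) := by fun_prop
    exact (hcont.tendsto' 0 1 (by simp)).comp hτ
  have hquot := hdiff.div hexp one_ne_zero
  rw [div_one] at hquot
  have hpow := (tendsto_natCast_mul_one_add_pow_sub_one
    (hquot.congr fun n => mul_div_assoc _ _ _)).mul_const (exp (-(s / 2) * u ^ 2))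
  refine hpow.congr' ?_
  filter_upwards [eventually_ne_atTop 0] with n hn
  rw [one_add_div (exp_ne_zero _), add_sub_cancel, div_pow, exp_neg_mul_div_sqrt_sq_pow hn]
  field_simp

lemma abs_natCast_mul_pow_div_sqrt_sub_gaussian_le {c C : ℝ} (hc : 0 ≤ c) (hcs : c ≤ s / 2)
    (hφc : ∀ t, |φ t| ≤ exp (-c * t ^ 2))
    (hφC : ∀ t, |φ t - exp (-(s / 2) * t ^ 2)| ≤ C * |t| ^ 4) {n : ℕ} (hn : 2 ≤ n) (u : ℝ) :
    |(n : ℝ) * (φ (u / √(n : ℝ)) ^ n - exp (-(s / 2) * u ^ 2))| ≤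
      C * (u ^ 4 * exp (-(c / 2) * u ^ 2)) := by
  have hn0 : n ≠ 0 := by omega
  set t := u / √(n : ℝ)
  have hnt : (n : ℝ) * t ^ 2 = u ^ 2 := natCast_mul_div_sqrt_sq hn0 u
  have hmax : max |φ t| |exp (-(s / 2) * t ^ 2)| ≤ exp (-c * t ^ 2) := by
    refine max_le (hφc t) ?_
    rw [abs_of_pos (exp_pos _)]
    gcongr
  have hmaxpow : max |φ t| |exp (-(s / 2) * t ^ 2)| ^ (n - 1) ≤ exp (-(c / 2) * u ^ 2) := by
    refine (pow_le_pow_left₀ (by positivity) hmax _).trans ?_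
    rw [← exp_nat_mul, ← hnt, Nat.cast_pred (by omega), exp_le_exp]
    have hn2 : (2 : ℝ) ≤ n := by exact_mod_cast hn
    nlinarith [mul_nonneg hc (sq_nonneg t)]
  have hdiff := abs_pow_sub_pow_le (φ t) (exp (-(s / 2) * t ^ 2)) n
  rw [exp_neg_mul_div_sqrt_sq_pow hn0] at hdiff
  calc |(n : ℝ) * (φ t ^ n - exp (-(s / 2) * u ^ 2))|
      = n * |φ t ^ n - exp (-(s / 2) * u ^ 2)| := by rw [abs_mul, Nat.abs_cast]
    _ ≤ n * (C * |t| ^ 4 * n * exp (-(c / 2) * u ^ 2)) := by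
        gcongr
        exact hdiff.trans (mul_le_mul (mul_le_mul_of_nonneg_right (hφC t) n.cast_nonneg) hmaxpow
          (by positivity) (mul_nonneg ((abs_nonneg _).trans (hφC t)) n.cast_nonneg))
    _ = C * (u ^ 4 * exp (-(c / 2) * u ^ 2)) := by
        rw [(by decide : Even 4).pow_abs, show u ^ 4 = (n * t ^ 2) ^ 2 by rw [hnt]; ring]
        ring

/-- The integrand of the rescaled Laplace integral of `φ ^ n * g` (substituting `t = u / √n`)
minus its Gaussian limit, multiplied by `n`; dominated convergence applies to it. -/
noncomputable def laplaceRemainder (φ g : ℝ → ℝ) (s g₀ : ℝ) (n : ℕ) (u : ℝ) : ℝ :=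
  n * (φ (u / √(n : ℝ)) ^ n * g (u / √(n : ℝ)) - g₀ * exp (-(s / 2) * u ^ 2))

lemma laplaceRemainder_eq (n : ℕ) (u : ℝ) :
    laplaceRemainder φ g s g₀ n u =
      n * (φ (u / √(n : ℝ)) ^ n - exp (-(s / 2) * u ^ 2)) * g (u / √(n : ℝ)) +
        exp (-(s / 2) * u ^ 2) * (n * (g (u / √(n : ℝ)) - g₀)) := by
  unfold laplaceRemainder
  ring

lemma tendsto_laplaceRemainder
    (hφ : (fun t => φ t - exp (-(s / 2) * t ^ 2) - κ * t ^ 4) =o[𝓝 0] fun t => t ^ 4)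
    (hg : (fun t => g t - g₀ - γ * t ^ 2) =o[𝓝 0] fun t => t ^ 2) (u : ℝ) :
    Tendsto (fun n => laplaceRemainder φ g s g₀ n u) atTop
      (𝓝 (κ * g₀ * (u ^ 4 * exp (-(s / 2) * u ^ 2)) + γ * (u ^ 2 * exp (-(s / 2) * u ^ 2)))) := by
  have hgn : Tendsto (fun n : ℕ => (n : ℝ) * (g (u / √(n : ℝ)) - g₀)) atTop (𝓝 (γ * u ^ 2)) := by
    refine tendsto_mul_comp_of_isLittleO_pow hg (tendsto_div_sqrt_natCast u)
      (tendsto_const_nhds.congr' ?_)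
    filter_upwards [eventually_ne_atTop 0] with n hn using (natCast_mul_div_sqrt_sq hn u).symm
  have hg0 : Tendsto (fun n : ℕ => g (u / √(n : ℝ))) atTop (𝓝 g₀) := by
    simpa using (tendsto_zero_of_tendsto_mul tendsto_natCast_atTop_atTop hgn).add_const g₀
  have hlim := ((tendsto_natCast_mul_pow_div_sqrt_sub_gaussian hφ u).mul hg0).add
    (hgn.const_mul (exp (-(s / 2) * u ^ 2)))
  simp only [laplaceRemainder_eq]
  convert hlim using 2
  ring

lemma abs_laplaceRemainder_le {c B C D : ℝ} (hc : 0 ≤ c) (hcs : c ≤ s / 2)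
    (hφc : ∀ t, |φ t| ≤ exp (-c * t ^ 2))
    (hφC : ∀ t, |φ t - exp (-(s / 2) * t ^ 2)| ≤ C * |t| ^ 4)
    (hgB : ∀ t, |g t| ≤ B) (hgD : ∀ t, |g t - g₀| ≤ D * |t| ^ 2) {n : ℕ} (hn : 2 ≤ n) (u : ℝ) :
    |laplaceRemainder φ g s g₀ n u| ≤
      C * B * (u ^ 4 * exp (-(c / 2) * u ^ 2)) + D * (u ^ 2 * exp (-(s / 2) * u ^ 2)) := by
  have hpow := abs_natCast_mul_pow_div_sqrt_sub_gaussian_le hc hcs hφc hφC hn u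
  have hnt : (n : ℝ) * (u / √(n : ℝ)) ^ 2 = u ^ 2 := natCast_mul_div_sqrt_sq (by omega) u
  have hgn : |(n : ℝ) * (g (u / √(n : ℝ)) - g₀)| ≤ D * u ^ 2 :=
    calc |(n : ℝ) * (g (u / √(n : ℝ)) - g₀)| = n * |g (u / √(n : ℝ)) - g₀| := by
          rw [abs_mul, Nat.abs_cast]
      _ ≤ n * (D * |u / √(n : ℝ)| ^ 2) := by gcongr; exact hgD _
      _ = D * u ^ 2 := by rw [sq_abs, ← hnt]; ring
  rw [laplaceRemainder_eq]
  refine (abs_add_le _ _).trans (add_le_add ?_ ?_)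
  · rw [abs_mul, mul_right_comm]
    exact mul_le_mul hpow (hgB _) (abs_nonneg _) ((abs_nonneg _).trans hpow)
  · rw [abs_mul, abs_of_pos (exp_pos _), mul_comm, ← mul_assoc]
    gcongr

lemma integrable_pow_mul_of_abs_le_gaussian {c B : ℝ} (hc : 0 < c) (hφm : Measurable φ)
    (hgm : Measurable g) (hφc : ∀ t, |φ t| ≤ exp (-c * t ^ 2)) (hgB : ∀ t, |g t| ≤ B)
    {n : ℕ} (hn : n ≠ 0) : Integrable fun t => φ t ^ n * g t := by
  have hnc : 0 < n * c := by positivity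
  refine ((integrable_exp_neg_mul_sq hnc).mul_const B).mono'
    ((hφm.pow_const n).mul hgm).aestronglyMeasurable (.of_forall fun t => ?_)
  rw [norm_eq_abs, abs_mul, abs_pow]
  calc |φ t| ^ n * |g t| ≤ exp (-c * t ^ 2) ^ n * B := by gcongr; exacts [hφc t, hgB t]
    _ = exp (-(n * c) * t ^ 2) * B := by rw [← exp_nat_mul]; ring_nf

lemma integrable_laplaceRemainder (hs : 0 < s) {n : ℕ} (hn : n ≠ 0)
    (hint : Integrable fun t => φ t ^ n * g t) : Integrable (laplaceRemainder φ g s g₀ n) :=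
  ((hint.comp_div (by positivity)).sub
    ((integrable_exp_neg_mul_sq (half_pos hs)).const_mul _)).const_mul _

lemma integral_laplaceRemainder (hs : 0 < s) {n : ℕ} (hn : n ≠ 0)
    (hint : Integrable fun t => φ t ^ n * g t) :
    ∫ u, laplaceRemainder φ g s g₀ n u =
      n * (√(n : ℝ) * (∫ t, φ t ^ n * g t) - g₀ * √(2 * π / s)) := by
  have hsqrt : √(n : ℝ) ≠ 0 := by positivity
  simp only [laplaceRemainder]
  rw [integral_const_mul, integral_sub (hint.comp_div hsqrt)
      ((integrable_exp_neg_mul_sq (half_pos hs)).const_mul _), integral_const_mul,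
    integral_gaussian, Measure.integral_comp_div (fun t => φ t ^ n * g t),
    abs_of_nonneg (sqrt_nonneg _), smul_eq_mul]
  congr 4
  field_simp

lemma integral_quartic_add_quadratic_mul_gaussian (hs : 0 < s) (a b : ℝ) :
    ∫ u : ℝ, a * (u ^ 4 * exp (-(s / 2) * u ^ 2)) + b * (u ^ 2 * exp (-(s / 2) * u ^ 2)) =
      √(2 * π / s) * (3 * a / s ^ 2 + b / s) := by
  rw [integral_add ((integrable_pow_mul_exp_neg_mul_sq (half_pos hs) 4).const_mul a)
      ((integrable_pow_mul_exp_neg_mul_sq (half_pos hs) 2).const_mul b),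
    integral_const_mul, integral_const_mul, integral_pow_four_mul_exp_neg_half_mul_sq hs,
    integral_sq_mul_exp_neg_half_mul_sq hs]
  ring

lemma exists_integrable_bound_laplaceRemainder {c B : ℝ} (hs : 0 < s) (hc : 0 < c)
    (hφc : ∀ t, |φ t| ≤ exp (-c * t ^ 2)) (hgB : ∀ t, |g t| ≤ B)
    (hφ : (fun t => φ t - exp (-(s / 2) * t ^ 2) - κ * t ^ 4) =o[𝓝 0] fun t => t ^ 4)
    (hg : (fun t => g t - g₀ - γ * t ^ 2) =o[𝓝 0] fun t => t ^ 2) :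
    ∃ b : ℝ → ℝ, Integrable b ∧
      ∀ n : ℕ, 2 ≤ n → ∀ u, |laplaceRemainder φ g s g₀ n u| ≤ b u := by
  obtain ⟨C, hφC⟩ := exists_forall_abs_le_mul_abs_pow (B := 2) (fun t => by
    have hφ1 : |φ t| ≤ 1 := (hφc t).trans (exp_le_one_iff.mpr (by nlinarith [sq_nonneg t]))
    have hexp1 : exp (-(s / 2) * t ^ 2) ≤ 1 := exp_le_one_iff.mpr (by nlinarith [sq_nonneg t])
    rw [abs_le] at hφ1 ⊢
    constructor <;> linarith [exp_pos (-(s / 2) * t ^ 2)]) (isBigO_pow_of_sub_isLittleO hφ)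
  obtain ⟨D, hgD⟩ := exists_forall_abs_le_mul_abs_pow (B := B + |g₀|)
    (fun t => (abs_sub _ _).trans (by gcongr; exact hgB t)) (isBigO_pow_of_sub_isLittleO hg)
  have hc' : 0 < min c (s / 2) := lt_min hc (half_pos hs)
  have hφc' : ∀ t, |φ t| ≤ exp (-min c (s / 2) * t ^ 2) := fun t =>
    (hφc t).trans (by gcongr; exact min_le_left _ _)
  exact ⟨_, ((integrable_pow_mul_exp_neg_mul_sq (half_pos hc') 4).const_mul (C * B)).add
      ((integrable_pow_mul_exp_neg_mul_sq (half_pos hs) 2).const_mul D),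
    fun n hn u => abs_laplaceRemainder_le hc'.le (min_le_right _ _) hφc' hφC hgB hgD hn u⟩

theorem tendsto_laplace_second_order {c B : ℝ} (hs : 0 < s) (hc : 0 < c)
    (hφm : Measurable φ) (hgm : Measurable g)
    (hφc : ∀ t, |φ t| ≤ exp (-c * t ^ 2)) (hgB : ∀ t, |g t| ≤ B)
    (hφ : (fun t => φ t - exp (-(s / 2) * t ^ 2) - κ * t ^ 4) =o[𝓝 0] fun t => t ^ 4)
    (hg : (fun t => g t - g₀ - γ * t ^ 2) =o[𝓝 0] fun t => t ^ 2) :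
    Tendsto (fun n : ℕ => (n : ℝ) *
        (√(n : ℝ) * (∫ t, φ t ^ n * g t) - g₀ * √(2 * π / s))) atTop
      (𝓝 (√(2 * π / s) * (3 * (κ * g₀) / s ^ 2 + γ / s))) := by
  have hint {n : ℕ} (hn : n ≠ 0) := integrable_pow_mul_of_abs_le_gaussian hc hφm hgm hφc hgB hn
  obtain ⟨b, hb, hrb⟩ := exists_integrable_bound_laplaceRemainder hs hc hφc hgB hφ hg
  rw [← integral_quartic_add_quadratic_mul_gaussian hs]
  refine (tendsto_integral_filter_of_dominated_convergence b
    (F := fun n => laplaceRemainder φ g s g₀ n) ?_ ?_ hb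
    (.of_forall fun u => tendsto_laplaceRemainder hφ hg u)).congr' ?_
  · filter_upwards [eventually_ne_atTop 0] with n hn
    exact (integrable_laplaceRemainder hs hn (hint hn)).aestronglyMeasurable
  · filter_upwards [eventually_ge_atTop 2] with n hn using .of_forall (hrb n hn)
  · filter_upwards [eventually_ne_atTop 0] with n hn
    exact integral_laplaceRemainder hs hn (hint hn)

lemma integral_Ioc_indicator_pow_mul {f g : ℝ → ℝ} {a b : ℝ} (hab : a ≤ b) {n : ℕ} (hn : n ≠ 0) :
    ∫ t, (Set.Ioc a b).indicator f t ^ n * g t = ∫ t in a..b, f t ^ n * g t := by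
  rw [intervalIntegral.integral_of_le hab, ← integral_indicator measurableSet_Ioc]
  congr with t
  by_cases ht : t ∈ Set.Ioc a b <;> simp [ht, hn]

end Laplace

section Cosine

open Asymptotics Real Topology

lemma cos_sub_quartic_isLittleO :
    (fun t : ℝ => cos t - (1 - t ^ 2 / 2 + t ^ 4 / 24)) =o[𝓝 0] fun t => t ^ 4 := by
  have hmulI : Tendsto (fun t : ℝ => (t : ℂ) * Complex.I) (𝓝 0) (𝓝 0) :=
    Continuous.tendsto' (by fun_prop) _ _ (by simp)
  have hpoly (t : ℝ) : ∑ i ∈ Finset.range 5, ((t : ℂ) * Complex.I) ^ i / i.factorial =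
      (1 - t ^ 2 / 2 + t ^ 4 / 24 : ℝ) + (t - t ^ 3 / 6 : ℝ) * Complex.I := by
    simp only [Finset.sum_range_succ, Finset.sum_range_zero, Nat.factorial]
    push_cast
    linear_combination
      (t ^ 2 / 2 + t ^ 3 * Complex.I / 6 + t ^ 4 / 24 * (Complex.I ^ 2 - 1)) * Complex.I_sq
  have hexp := (Complex.exp_sub_sum_range_succ_isLittleO_pow 4).comp_tendsto hmulI
  refine .of_norm_right ((isBigO_of_le _ fun t => ?_).trans_isLittleO
    (hexp.norm_right.congr_right fun t => ?_))
  · refine le_trans (le_of_eq ?_) (Complex.abs_re_le_norm _)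
    rw [Function.comp_apply, hpoly, Complex.sub_re, Complex.exp_ofReal_mul_I_re, norm_eq_abs,
      ← Complex.mk_eq_add_mul_I]
  · simp

lemma one_sub_cos_sub_quadratic_isLittleO :
    (fun t : ℝ => 1 - cos t - 1 / 2 * t ^ 2) =o[𝓝 0] fun t => t ^ 2 := by
  have hpow : (fun t : ℝ => t ^ 4) =o[𝓝 0] fun t => t ^ 2 := isLittleO_pow_pow (by norm_num)
  refine ((hpow.const_mul_left (-1 / 24)).sub
    (cos_sub_quartic_isLittleO.trans hpow)).congr_left fun t => ?_
  ring

lemma exp_neg_half_mul_sq_sub_quartic_isLittleO (s : ℝ) :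
    (fun t : ℝ => exp (-(s / 2) * t ^ 2) - (1 - s / 2 * t ^ 2 + s ^ 2 / 8 * t ^ 4))
      =o[𝓝 0] fun t => t ^ 4 := by
  have hsq : Tendsto (fun t : ℝ => -(s / 2) * t ^ 2) (𝓝 0) (𝓝 0) :=
    Continuous.tendsto' (by fun_prop) _ _ (by simp)
  have hbig : (fun t : ℝ => (-(s / 2) * t ^ 2) ^ 2) =O[𝓝 0] fun t => t ^ 4 :=
    (isBigO_const_mul_self ((s / 2) ^ 2) (fun t : ℝ => t ^ 4) _).congr_left fun t => by ring
  refine (((exp_sub_sum_range_succ_isLittleO_pow 2).comp_tendsto hsq).trans_isBigO hbig).congr_left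
    fun t => ?_
  simp only [Function.comp_apply, Finset.sum_range_succ, Finset.sum_range_zero, Nat.factorial]
  push_cast
  ring

lemma one_sub_mul_one_sub_cos_sub_gaussian_isLittleO (s : ℝ) :
    (fun t : ℝ => 1 - s * (1 - cos t) - exp (-(s / 2) * t ^ 2) - (s / 24 - s ^ 2 / 8) * t ^ 4)
      =o[𝓝 0] fun t => t ^ 4 := by
  refine ((cos_sub_quartic_isLittleO.const_mul_left s).sub
    (exp_neg_half_mul_sq_sub_quartic_isLittleO s)).congr_left fun t => ?_
  ring

lemma abs_one_sub_mul_one_sub_cos_le {s t : ℝ} (hs0 : 0 ≤ s) (hs1 : s ≤ 1) (ht : |t| ≤ π) :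
    |1 - s * (1 - cos t)| ≤ exp (-(2 * (s * (1 - s)) / π ^ 2) * t ^ 2) := by
  have : 0 ≤ s * (1 - s) := mul_nonneg hs0 (sub_nonneg.mpr hs1)
  have hx0 : 0 ≤ 1 - cos t := sub_nonneg.mpr (cos_le_one t)
  have hx2 : 1 - cos t ≤ 2 := by linarith [neg_one_le_cos t]
  calc |1 - s * (1 - cos t)| ≤ 1 - s * (1 - s) * (1 - cos t) :=
        abs_le.mpr ⟨by nlinarith [mul_nonneg (sq_nonneg (1 - s)) hx0], by
          nlinarith [mul_nonneg (sq_nonneg s) hx0]⟩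
    _ ≤ 1 - s * (1 - s) * (2 / π ^ 2 * t ^ 2) := by
        gcongr
        linarith [cos_le_one_sub_mul_cos_sq ht]
    _ = -(2 * (s * (1 - s)) / π ^ 2) * t ^ 2 + 1 := by ring
    _ ≤ exp (-(2 * (s * (1 - s)) / π ^ 2) * t ^ 2) := add_one_le_exp _

end Cosine

section GeomKernel

open Asymptotics Real Topology

/-- The real part of `(1 - z * exp (-i t))⁻¹`, the sum of the geometric series with ratio
`z * exp (-i t)`. -/
noncomputable def geomKernel (z t : ℝ) : ℝ :=
  (1 - z * cos t) / (1 - 2 * z * cos t + z ^ 2)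

variable {z : ℝ}

lemma sq_one_sub_le_geomKernel_denom (hz : 0 ≤ z) (t : ℝ) :
    (1 - z) ^ 2 ≤ 1 - 2 * z * cos t + z ^ 2 := by
  nlinarith [cos_le_one t]

lemma geomKernel_denom_pos (hz0 : 0 ≤ z) (hz1 : z < 1) (t : ℝ) :
    0 < 1 - 2 * z * cos t + z ^ 2 :=
  (pow_pos (sub_pos.mpr hz1) 2).trans_le (sq_one_sub_le_geomKernel_denom hz0 t)

lemma continuous_geomKernel (hz0 : 0 ≤ z) (hz1 : z < 1) : Continuous (geomKernel z) :=
  .div (by fun_prop) (by fun_prop) fun t => (geomKernel_denom_pos hz0 hz1 t).ne'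

lemma abs_geomKernel_le (hz0 : 0 ≤ z) (hz1 : z < 1) (t : ℝ) :
    |geomKernel z t| ≤ 2 / (1 - z) ^ 2 := by
  have hnum : |1 - z * cos t| ≤ 2 :=
    abs_le.mpr ⟨by nlinarith [cos_le_one t], by nlinarith [neg_one_le_cos t]⟩
  have : 0 < (1 - z) ^ 2 := pow_pos (sub_pos.mpr hz1) 2
  rw [geomKernel, abs_div, abs_of_pos (geomKernel_denom_pos hz0 hz1 t)]
  gcongr
  exact sq_one_sub_le_geomKernel_denom hz0 t

lemma geomKernel_sub_inv (hz0 : 0 ≤ z) (hz1 : z < 1) (t : ℝ) :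
    geomKernel z t - 1 / (1 - z) =
      -(z * (1 + z)) / ((1 - z) * (1 - 2 * z * cos t + z ^ 2)) * (1 - cos t) := by
  have hden := (geomKernel_denom_pos hz0 hz1 t).ne'
  have hz : 1 - z ≠ 0 := (sub_pos.mpr hz1).ne'
  rw [geomKernel, div_sub_div _ _ hden hz, div_mul_eq_mul_div, mul_comm (1 - z)]
  congr 1
  ring

lemma geomKernel_sub_quadratic_isLittleO (hz0 : 0 ≤ z) (hz1 : z < 1) :
    (fun t => geomKernel z t - 1 / (1 - z) - -(z * (1 + z)) / (2 * (1 - z) ^ 3) * t ^ 2)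
      =o[𝓝 0] fun t => t ^ 2 := by
  have hz : 1 - z ≠ 0 := (sub_pos.mpr hz1).ne'
  have hfactor : Continuous fun t =>
      -(z * (1 + z)) / ((1 - z) * (1 - 2 * z * cos t + z ^ 2)) :=
    .div (by fun_prop) (by fun_prop) fun t => mul_ne_zero hz (geomKernel_denom_pos hz0 hz1 t).ne'
  refine (mul_sub_mul_pow_isLittleO hfactor.continuousAt
    one_sub_cos_sub_quadratic_isLittleO).congr_left fun t => ?_
  rw [← geomKernel_sub_inv hz0 hz1, cos_zero, show 1 - 2 * z * 1 + z ^ 2 = (1 - z) ^ 2 by ring]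
  field_simp

lemma tendsto_integral_one_sub_mul_one_sub_cos_pow_mul_geomKernel {s : ℝ} (hs0 : 0 < s)
    (hs1 : s < 1) (hz0 : 0 ≤ z) (hz1 : z < 1) :
    Tendsto (fun n : ℕ => (n : ℝ) * (√(n : ℝ) *
        (∫ t in -π..π, (1 - s * (1 - cos t)) ^ n * geomKernel z t) -
          1 / (1 - z) * √(2 * π / s))) atTop
      (𝓝 (1 / (1 - z) * √(2 * π / s) *
        ((1 - 3 * s) / (8 * s) - z * (1 + z) / (2 * (1 - z) ^ 2 * s)))) := by
  set φ : ℝ → ℝ := (Set.Ioc (-π) π).indicator fun t => 1 - s * (1 - cos t) with hφ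
  have hφ_measurable : Measurable φ := Measurable.indicator (by fun_prop) measurableSet_Ioc
  have hφ_le : ∀ t, |φ t| ≤ exp (-(2 * (s * (1 - s)) / π ^ 2) * t ^ 2) := fun t => by
    by_cases ht : t ∈ Set.Ioc (-π) π
    · simpa [hφ, ht] using abs_one_sub_mul_one_sub_cos_le hs0.le hs1.le (abs_le.mpr ⟨ht.1.le, ht.2⟩)
    · simpa [hφ, ht] using (exp_pos _).le
  have hφ_expansion : (fun t => φ t - exp (-(s / 2) * t ^ 2) - (s / 24 - s ^ 2 / 8) * t ^ 4)
      =o[𝓝 0] fun t => t ^ 4 := by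
    refine (one_sub_mul_one_sub_cos_sub_gaussian_isLittleO s).congr' ?_ .rfl
    filter_upwards [Ioc_mem_nhds (neg_lt_zero.mpr pi_pos) pi_pos] with t ht
    rw [hφ, Set.indicator_of_mem ht]
  have hrate : 0 < 2 * (s * (1 - s)) / π ^ 2 :=
    div_pos (mul_pos two_pos (mul_pos hs0 (sub_pos.mpr hs1))) (by positivity)
  have hlim := tendsto_laplace_second_order hs0 hrate hφ_measurable
    (continuous_geomKernel hz0 hz1).measurable hφ_le (abs_geomKernel_le hz0 hz1) hφ_expansion
    (geomKernel_sub_quadratic_isLittleO hz0 hz1)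
  have hz : 1 - z ≠ 0 := (sub_pos.mpr hz1).ne'
  convert hlim.congr' ?_ using 2
  · field_simp
    ring
  · filter_upwards [eventually_ne_atTop 0] with n hn
    rw [integral_Ioc_indicator_pow_mul (by linarith [pi_pos]) hn]

end GeomKernel

section NonnegSum

open Real

lemma circleIntegral_zpow (m : ℤ) {ρ : ℝ} (hρ : ρ ≠ 0) :
    ∮ w in C(0, ρ), w ^ m = if m = -1 then 2 * π * Complex.I else 0 := by
  split_ifs with hm
  · simpa [hm] using circleIntegral.integral_sub_center_inv 0 hρ
  · simpa using circleIntegral.integral_sub_zpow_of_ne hm 0 0 ρ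

variable {ρ : ℝ}

lemma continuousOn_zpow_sphere (hρ : 1 < ρ) (m : ℤ) :
    ContinuousOn (fun w : ℂ => w ^ m) (Metric.sphere 0 ρ) :=
  continuousOn_id.zpow₀ m fun w hw => .inl (ne_zero_of_mem_sphere (by linarith) ⟨w, hw⟩)

lemma sub_one_ne_zero_of_mem_sphere (hρ : 1 < ρ) {w : ℂ} (hw : w ∈ Metric.sphere 0 ρ) :
    w - 1 ≠ 0 := fun h => hρ.ne (by simpa [sub_eq_zero.mp h] using hw)

lemma circleIntegrable_zpow_mul_inv_sub_one (hρ : 1 < ρ) (m : ℤ) :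
    CircleIntegrable (fun w : ℂ => w ^ m * (w - 1)⁻¹) 0 ρ :=
  ContinuousOn.circleIntegrable (by linarith) ((continuousOn_zpow_sphere hρ m).mul
    ((continuousOn_id.sub continuousOn_const).inv₀ fun _ => sub_one_ne_zero_of_mem_sphere hρ))

lemma circleIntegral_zpow_succ_mul_inv_sub_one (hρ : 1 < ρ) (m : ℤ) :
    ∮ w in C(0, ρ), w ^ (m + 1) * (w - 1)⁻¹ =
      (∮ w in C(0, ρ), w ^ m * (w - 1)⁻¹) + if m = -1 then 2 * π * Complex.I else 0 := by
  have hρ0 : 0 < ρ := by linarith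
  rw [← circleIntegral_zpow m hρ0.ne', ← circleIntegral.integral_add
    (circleIntegrable_zpow_mul_inv_sub_one hρ m)
    ((continuousOn_zpow_sphere hρ m).circleIntegrable hρ0.le)]
  refine circleIntegral.integral_congr hρ0.le fun w hw => ?_
  have hw0 : w ≠ 0 := ne_zero_of_mem_sphere hρ0.ne' ⟨w, hw⟩
  have hw1 := sub_one_ne_zero_of_mem_sphere hρ hw
  simp only [zpow_add_one₀ hw0]
  field_simp
  ring

lemma circleIntegral_zpow_mul_inv_sub_one (hρ : 1 < ρ) (m : ℤ) :
    ∮ w in C(0, ρ), w ^ m * (w - 1)⁻¹ = if 0 ≤ m then 2 * π * Complex.I else 0 := by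
  have hzero : ∮ w in C(0, ρ), (w - 1)⁻¹ = 2 * π * Complex.I :=
    circleIntegral.integral_sub_inv_of_mem_ball (by simpa using hρ)
  induction m with
  | zero => simpa using hzero
  | succ m ih => simpa [circleIntegral_zpow_succ_mul_inv_sub_one hρ, show (m : ℤ) ≠ -1 by omega,
      show (0 : ℤ) ≤ m + 1 by omega] using ih
  | pred m ih =>
    have hstep := circleIntegral_zpow_succ_mul_inv_sub_one hρ (-m - 1)
    rw [sub_add_cancel, ih] at hstep
    rw [eq_sub_of_add_eq hstep.symm, if_neg (show ¬(0 : ℤ) ≤ -m - 1 by omega)]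
    rcases m.eq_zero_or_pos with hm | hm
    · simp [hm]
    · rw [if_neg (by omega), if_neg (by omega), sub_zero]

variable {X : Type*} [Fintype X]

/-- The total weight of the `n`-tuples with nonnegative sum of steps `S`, a tuple being weighted by
the product of the weights `P`. If `P` is a probability mass function, this is the probability that
the random walk with i.i.d. steps `S x`, `x ∼ P`, is nonnegative at time `n`. -/
def nonnegSumWeight (P : X → ℝ) (S : X → ℤ) (n : ℕ) : ℝ :=
  ∑ xs : Fin n → X, if 0 ≤ ∑ k, S (xs k) then ∏ k, P (xs k) else 0

/-- The generating function `∑ P x * w ^ S x` of the steps `S x` with weights `P x`. -/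
noncomputable def stepGenFun (P : X → ℝ) (S : X → ℤ) (w : ℂ) : ℂ :=
  ∑ x, (P x : ℂ) * w ^ S x

variable {P : X → ℝ} {S : X → ℤ}

lemma zpow_finset_sum {G : Type*} [CommGroupWithZero G] {w : G} (hw : w ≠ 0) {κ : Type*}
    (t : Finset κ) (a : κ → ℤ) : w ^ ∑ k ∈ t, a k = ∏ k ∈ t, w ^ a k := by
  induction t using Finset.cons_induction with
  | empty => simp
  | cons k t hk ih => rw [Finset.sum_cons, Finset.prod_cons, zpow_add₀ hw, ih]

lemma stepGenFun_pow {w : ℂ} (hw : w ≠ 0) (n : ℕ) :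
    stepGenFun P S w ^ n = ∑ xs : Fin n → X, (∏ k, (P (xs k) : ℂ)) * w ^ ∑ k, S (xs k) := by
  simp only [stepGenFun, Fintype.sum_pow, Finset.prod_mul_distrib, zpow_finset_sum hw]

theorem circleIntegral_stepGenFun_pow_mul_inv_sub_one (hρ : 1 < ρ) (n : ℕ) :
    ∮ w in C(0, ρ), stepGenFun P S w ^ n * (w - 1)⁻¹ =
      2 * π * Complex.I * nonnegSumWeight P S n := by
  have hρ0 : 0 < ρ := by linarith
  have hexpand : Set.EqOn (fun w => stepGenFun P S w ^ n * (w - 1)⁻¹)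
      (fun w => ∑ xs : Fin n → X, (∏ k, (P (xs k) : ℂ)) * (w ^ (∑ k, S (xs k)) * (w - 1)⁻¹))
      (Metric.sphere 0 ρ) := fun w hw => by
    simp only [stepGenFun_pow (ne_zero_of_mem_sphere hρ0.ne' ⟨w, hw⟩), Finset.sum_mul, mul_assoc]
  rw [circleIntegral.integral_congr hρ0.le hexpand, circleIntegral.integral_fun_sum
    fun xs _ => (circleIntegrable_zpow_mul_inv_sub_one hρ _).const_smul (a := ∏ k, (P (xs k) : ℂ))]
  simp only [circleIntegral.integral_const_mul, circleIntegral_zpow_mul_inv_sub_one hρ,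
    nonnegSumWeight, Complex.ofReal_sum, Finset.mul_sum]
  refine Finset.sum_congr rfl fun xs _ => ?_
  split_ifs <;> simp [mul_comm]

end NonnegSum

section LazyWalk

open Real Topology

variable {X : Type*} [Fintype X] {P : X → ℝ} {S : X → ℤ} {M s z : ℝ}

lemma re_inv_one_sub_mul_exp_neg (z t : ℝ) :
    ((1 - z * Complex.exp (-(t * Complex.I)))⁻¹).re = geomKernel z t := by
  have hrect : (1 - z * Complex.exp (-(t * Complex.I)) : ℂ) = ⟨1 - z * cos t, z * sin t⟩ := by
    apply Complex.ext <;> simp [Complex.exp_re, Complex.exp_im]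
  rw [hrect, Complex.inv_re, Complex.normSq_mk, geomKernel]
  congr 1
  linear_combination z ^ 2 * sin_sq_add_cos_sq t

lemma one_sub_mul_exp_neg_ne_zero (hz0 : 0 ≤ z) (hz1 : z < 1) (t : ℝ) :
    (1 - z * Complex.exp (-(t * Complex.I)) : ℂ) ≠ 0 := fun h => by
  have hnorm := congrArg norm (sub_eq_zero.mp h)
  rw [norm_one, norm_mul, ← neg_mul, ← Complex.ofReal_neg, Complex.norm_exp_ofReal_mul_I, mul_one,
    Complex.norm_of_nonneg hz0] at hnorm
  exact hz1.ne' hnorm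

lemma re_integral_ofReal_mul_inv_one_sub_mul_exp_neg (hz0 : 0 ≤ z) (hz1 : z < 1) {f : ℝ → ℝ}
    (hf : Continuous f) (a b : ℝ) :
    (∫ t in a..b, (f t : ℂ) * (1 - z * Complex.exp (-(t * Complex.I)))⁻¹).re =
      ∫ t in a..b, f t * geomKernel z t := by
  have hcont : Continuous fun t : ℝ => (f t : ℂ) * (1 - z * Complex.exp (-(t * Complex.I)))⁻¹ :=
    (by fun_prop : Continuous fun t : ℝ => (f t : ℂ)).mul
      (.inv₀ (by fun_prop) (one_sub_mul_exp_neg_ne_zero hz0 hz1))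
  rw [← Complex.reCLM_apply, ← Complex.reCLM.intervalIntegral_comp_comm
    (hcont.intervalIntegrable a b)]
  simp only [Complex.reCLM_apply, Complex.re_ofReal_mul, re_inv_one_sub_mul_exp_neg]

lemma integral_zero_two_pi_eq_of_periodic {f : ℝ → ℝ} (hf : Function.Periodic f (2 * π)) :
    ∫ t in 0..2 * π, f t = ∫ t in -π..π, f t := by
  simpa [show -π + 2 * π = π by ring] using hf.intervalIntegral_add_eq 0 (-π)

lemma one_sub_add_half_mul_exp_add_inv (s t : ℝ) :
    (1 - s + s / 2 * (Complex.exp (t * Complex.I) + (Complex.exp (t * Complex.I))⁻¹) : ℂ) =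
      (1 - s * (1 - cos t) : ℝ) := by
  rw [← Complex.exp_neg, Complex.ofReal_sub]
  push_cast
  rw [Complex.cos]
  ring_nf

lemma circleIntegral_tilted_pow_mul_inv_sub_one (hz : 0 < z)
    (hgen : ∀ ζ : ℂ, ζ ≠ 0 → stepGenFun P S (ζ / z) = M * (1 - s + s / 2 * (ζ + ζ⁻¹))) (n : ℕ) :
    ∮ w in C(0, z⁻¹), stepGenFun P S w ^ n * (w - 1)⁻¹ =
      Complex.I * ∫ t in 0..2 * π, (((M * (1 - s * (1 - cos t))) ^ n : ℝ) : ℂ) *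
        (1 - z * Complex.exp (-(t * Complex.I)))⁻¹ := by
  rw [circleIntegral, ← intervalIntegral.integral_const_mul]
  refine intervalIntegral.integral_congr fun t _ => ?_
  have hz' : (z : ℂ) ≠ 0 := Complex.ofReal_ne_zero.mpr hz.ne'
  have hexp := Complex.exp_ne_zero (t * Complex.I)
  have hw : circleMap 0 z⁻¹ t = Complex.exp (t * Complex.I) / z := by
    rw [circleMap_zero, Complex.ofReal_inv, div_eq_inv_mul]
  have hkernel : Complex.exp (t * Complex.I) / z * (Complex.exp (t * Complex.I) / z - 1)⁻¹ =
      (1 - z * Complex.exp (-(t * Complex.I)))⁻¹ := by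
    rw [Complex.exp_neg, ← inv_inv (Complex.exp (t * Complex.I) / z), ← mul_inv, mul_sub_one,
      inv_inv, inv_mul_cancel₀ (div_ne_zero hexp hz'), inv_div, div_eq_mul_inv]
  rw [deriv_circleMap, hw, hgen _ hexp, one_sub_add_half_mul_exp_add_inv, ← hkernel, smul_eq_mul]
  push_cast
  ring

theorem nonnegSumWeight_eq_integral (hz0 : 0 < z) (hz1 : z < 1)
    (hgen : ∀ ζ : ℂ, ζ ≠ 0 → stepGenFun P S (ζ / z) = M * (1 - s + s / 2 * (ζ + ζ⁻¹))) (n : ℕ) :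
    nonnegSumWeight P S n =
      M ^ n / (2 * π) * ∫ t in -π..π, (1 - s * (1 - cos t)) ^ n * geomKernel z t := by
  have hperiodic : Function.Periodic
      (fun t => (M * (1 - s * (1 - cos t))) ^ n * geomKernel z t) (2 * π) := fun t => by
    simp only [geomKernel, cos_add_two_pi]
  have hcauchy := circleIntegral_stepGenFun_pow_mul_inv_sub_one (P := P) (S := S)
    ((one_lt_inv₀ hz0).mpr hz1) n
  rw [circleIntegral_tilted_pow_mul_inv_sub_one hz0 hgen, mul_right_comm,
    mul_comm Complex.I] at hcauchy
  have hre := congrArg Complex.re (mul_right_cancel₀ Complex.I_ne_zero hcauchy)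
  rw [re_integral_ofReal_mul_inv_one_sub_mul_exp_neg hz0.le hz1 (by fun_prop),
    integral_zero_two_pi_eq_of_periodic hperiodic] at hre
  simp only [mul_pow, mul_assoc (M ^ n), intervalIntegral.integral_const_mul] at hre
  rw [div_mul_eq_mul_div, hre, ← Complex.ofReal_ofNat, ← Complex.ofReal_mul, ← Complex.ofReal_mul,
    Complex.ofReal_re, mul_div_cancel_left₀ _ two_pi_pos.ne']

lemma sqrt_two_pi_mul_mul_natCast (hs : 0 < s) (n : ℕ) :
    √(2 * π * s * n) = 2 * π * √(n : ℝ) / √(2 * π / s) := by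
  rw [eq_div_iff (by positivity), ← sqrt_mul (by positivity),
    show 2 * π * s * n * (2 * π / s) = (2 * π) ^ 2 * n by field_simp,
    sqrt_mul (by positivity), sqrt_sq two_pi_pos.le]

theorem tendsto_nonnegSumWeight_div_sub_one (hM : M ≠ 0) (hs0 : 0 < s) (hs1 : s < 1)
    (hz0 : 0 < z) (hz1 : z < 1)
    (hgen : ∀ ζ : ℂ, ζ ≠ 0 → stepGenFun P S (ζ / z) = M * (1 - s + s / 2 * (ζ + ζ⁻¹))) :
    Tendsto (fun n : ℕ => (n : ℝ) * (nonnegSumWeight P S n /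
        (M ^ n / √(2 * π * s * n) * (1 + (1 - 3 * s) / (8 * s * n)) / (1 - z) *
          (1 - z * (1 + z) / (2 * (1 - z) ^ 2 * s * n))) - 1)) atTop (𝓝 0) := by
  set J : ℕ → ℝ := fun n => ∫ t in -π..π, (1 - s * (1 - cos t)) ^ n * geomKernel z t
  set C : ℝ := 1 / (1 - z) * √(2 * π / s)
  have hC : C ≠ 0 := mul_ne_zero (one_div_ne_zero (sub_pos.mpr hz1).ne') (by positivity)
  have hJ : Tendsto (fun n : ℕ => (n : ℝ) * (√(n : ℝ) * J n / C - 1)) atTop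
      (𝓝 ((1 - 3 * s) / (8 * s) - z * (1 + z) / (2 * (1 - z) ^ 2 * s))) := by
    have hlim := (tendsto_integral_one_sub_mul_one_sub_cos_pow_mul_geomKernel hs0 hs1 hz0.le
      hz1).div_const C
    rw [mul_div_cancel_left₀ _ hC] at hlim
    exact hlim.congr fun n => by rw [mul_div_assoc, sub_div, div_self hC]
  refine (tendsto_mul_div_sub_one tendsto_natCast_atTop_atTop hJ
    (tendsto_natCast_mul_one_add_mul_one_sub_sub_one _ _)).congr' ?_
  filter_upwards [eventually_ne_atTop 0] with n hn
  rw [nonnegSumWeight_eq_integral hz0 hz1 hgen, sqrt_two_pi_mul_mul_natCast hs0,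
    div_div (1 - 3 * s), div_div (z * (1 + z))]
  congr 2
  simp only [C, J]
  field_simp

end LazyWalk

section Agreement

variable {p n : ℕ}

/-- The difference of the agreement indicators of the pairs `{k, l}` and `{i, j}`, the step of the
random walk comparing the two empirical agreement weights. -/
def agreementGap (i j k l : Fin p) (x : Fin p → Bool) : ℤ :=
  (if x k = x l then 1 else 0) - if x i = x j then 1 else 0

lemma Ahat_le_Ahat_iff (hn : n ≠ 0) (xs : Fin n → Fin p → Bool) (i j k l : Fin p) :
    Ahat xs i j ≤ Ahat xs k l ↔ 0 ≤ ∑ m, agreementGap i j k l (xs m) := by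
  have hn' : (0 : ℝ) < n := by positivity
  simp only [Ahat, agreementGap]
  rw [div_le_div_iff_of_pos_right hn', Nat.cast_le, Finset.sum_sub_distrib, sub_nonneg,
    Finset.sum_boole, Finset.sum_boole]
  norm_cast

lemma iidProb_Ahat_le_Ahat (P : (Fin p → Bool) → ℝ) (hn : n ≠ 0) (i j k l : Fin p) :
    iidProb P n {xs | Ahat xs i j ≤ Ahat xs k l} = nonnegSumWeight P (agreementGap i j k l) n := by
  simp only [iidProb, nonnegSumWeight, Set.mem_ofPred_eq, Ahat_le_Ahat_iff hn]

end Agreement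

section Chain

lemma chainA_edgeFinset : chainA.edgeFinset = {s(0, 1), s(1, 2)} := by
  ext e
  rw [SimpleGraph.mem_edgeFinset]
  simp only [chainA, SimpleGraph.edgeSet_fromEdgeSet, Set.mem_sdiff, Set.mem_insert_iff,
    Set.mem_singleton_iff, Finset.mem_insert, Finset.mem_singleton]
  refine and_iff_left_of_imp ?_
  rintro (rfl | rfl) <;> simp

lemma isingP_chainA (θ : ℝ) (x : Fin 3 → Bool) :
    isingP θ chainA x =
      1 / 2 * ((if x 0 = x 1 then 1 - θ else θ) * if x 1 = x 2 then 1 - θ else θ) := by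
  rw [isingP, chainA_edgeFinset, Finset.prod_pair (by decide)]
  simp only [pairWeight, Sym2.lift_mk]

lemma sum_fin_succ_arrow {α A : Type*} [Fintype α] [AddCommMonoid A] {m : ℕ}
    (f : (Fin (m + 1) → α) → A) : ∑ x, f x = ∑ a, ∑ y, f (Matrix.vecCons a y) := by
  rw [← Fintype.sum_prod_type', ← (Fin.consEquiv fun _ => α).sum_comp]
  rfl

lemma stepGenFun_chainA (θ : ℝ) (w : ℂ) :
    stepGenFun (isingP θ chainA) (agreementGap 0 1 0 2) w =
      1 - θ + θ ^ 2 * w + θ * (1 - θ) * w⁻¹ := by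
  simp only [stepGenFun, isingP_chainA, agreementGap, sum_fin_succ_arrow, Fintype.sum_bool,
    Fintype.sum_unique, Matrix.cons_val, reduceIte, Bool.true_eq_false, Bool.false_eq_true,
    sub_self, sub_zero, zero_sub, zpow_zero, zpow_one, zpow_neg_one]
  push_cast
  ring

end Chain

section Parameters

open Real

variable {θ : ℝ}

lemma one_sub_mul_zTheta_sq (hθ0 : 0 ≤ θ) (hθ1 : θ < 1) : (1 - θ) * zTheta θ ^ 2 = θ := by
  have hθ : 0 < 1 - θ := sub_pos.mpr hθ1
  rw [zTheta, sq_sqrt (by positivity), mul_div_cancel₀ _ hθ.ne']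

lemma zTheta_pos (hθ0 : 0 < θ) (hθ1 : θ < 1) : 0 < zTheta θ :=
  sqrt_pos.mpr (div_pos hθ0 (sub_pos.mpr hθ1))

lemma zTheta_lt_one (hθ : θ < 1 / 2) : zTheta θ < 1 := by
  rw [zTheta, sqrt_lt' one_pos, one_pow, div_lt_one] <;> linarith

lemma sqrt_four_mul_eq_zTheta (hθ0 : 0 ≤ θ) (hθ1 : θ < 1) :
    √(4 * θ * (1 - θ)) = 2 * (1 - θ) * zTheta θ := by
  have : 0 < 1 - θ := sub_pos.mpr hθ1
  have hz : 0 ≤ zTheta θ := sqrt_nonneg _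
  rw [← sqrt_sq (by positivity : 0 ≤ 2 * (1 - θ) * zTheta θ)]
  congr 1
  linear_combination -4 * (1 - θ) * one_sub_mul_zTheta_sq hθ0 hθ1

lemma exp_neg_Kexp (hθ0 : 0 ≤ θ) (hθ1 : θ < 1) :
    exp (-Kexp θ) = 1 - θ + 2 * θ * (1 - θ) * zTheta θ := by
  have hz : 0 ≤ zTheta θ := sqrt_nonneg _
  have : 0 < 1 - θ := sub_pos.mpr hθ1
  have hpos : 0 < 1 - θ + 2 * θ * (1 - θ) * zTheta θ := by positivity
  rw [Kexp, neg_neg, sqrt_four_mul_eq_zTheta hθ0 hθ1,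
    show 1 - θ * (1 - 2 * (1 - θ) * zTheta θ) = 1 - θ + 2 * θ * (1 - θ) * zTheta θ by ring,
    exp_log hpos]

lemma exp_neg_Kexp_mul_sigmaSq (hθ0 : 0 ≤ θ) (hθ1 : θ < 1) :
    exp (-Kexp θ) * sigmaSq θ = 2 * θ * (1 - θ) * zTheta θ := by
  rw [sigmaSq, sqrt_four_mul_eq_zTheta hθ0 hθ1, mul_left_comm, ← exp_add, neg_add_cancel, exp_zero]
  ring

lemma sigmaSq_pos (hθ0 : 0 < θ) (hθ1 : θ < 1) : 0 < sigmaSq θ := by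
  have : 0 < 1 - θ := sub_pos.mpr hθ1
  exact mul_pos (mul_pos hθ0 (sqrt_pos.mpr (by positivity))) (exp_pos _)

lemma sigmaSq_lt_one (hθ0 : 0 ≤ θ) (hθ1 : θ < 1) : sigmaSq θ < 1 := by
  refine lt_of_mul_lt_mul_left ?_ (exp_pos (-Kexp θ)).le
  rw [exp_neg_Kexp_mul_sigmaSq hθ0 hθ1, exp_neg_Kexp hθ0 hθ1]
  linarith

lemma stepGenFun_chainA_div_zTheta (hθ0 : 0 < θ) (hθ1 : θ < 1) (ζ : ℂ) :
    stepGenFun (isingP θ chainA) (agreementGap 0 1 0 2) (ζ / zTheta θ) =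
      exp (-Kexp θ) * (1 - sigmaSq θ + sigmaSq θ / 2 * (ζ + ζ⁻¹)) := by
  have hz : (zTheta θ : ℂ) ≠ 0 := Complex.ofReal_ne_zero.mpr (zTheta_pos hθ0 hθ1).ne'
  have hzsq : (1 - θ : ℂ) * zTheta θ ^ 2 = θ := mod_cast one_sub_mul_zTheta_sq hθ0.le hθ1
  have hM : (exp (-Kexp θ) : ℂ) = 1 - θ + 2 * θ * (1 - θ) * zTheta θ :=
    mod_cast exp_neg_Kexp hθ0.le hθ1
  have hMσ : (exp (-Kexp θ) : ℂ) * sigmaSq θ = 2 * θ * (1 - θ) * zTheta θ :=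
    mod_cast exp_neg_Kexp_mul_sigmaSq hθ0.le hθ1
  have hdiv : (θ / zTheta θ : ℂ) = (1 - θ) * zTheta θ := by
    rw [div_eq_iff hz, mul_assoc, ← sq, hzsq]
  rw [stepGenFun_chainA, inv_div]
  linear_combination θ * ζ * hdiv - hM + (1 - (ζ + ζ⁻¹) / 2) * hMσ

end Parameters

/-- exact asymptotics of the crossover probability
`ℙ(Â_{1,3} ≥ Â_{1,2}) = f(n)(1 + o(n⁻¹))` for the 3-node chain. -/
theorem stmt10 (θ : ℝ) (hθ0 : 0 < θ) (hθ1 : θ < 1 / 2) :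
    Filter.Tendsto (fun n : ℕ =>
      (n : ℝ) * (iidProb (isingP θ chainA) n {xs | Ahat xs 0 1 ≤ Ahat xs 0 2} / fn θ n - 1))
      Filter.atTop (nhds 0) := by
  have hθ : θ < 1 := by linarith
  refine (tendsto_nonnegSumWeight_div_sub_one (Real.exp_ne_zero (-Kexp θ)) (sigmaSq_pos hθ0 hθ)
    (sigmaSq_lt_one hθ0.le hθ) (zTheta_pos hθ0 hθ) (zTheta_lt_one hθ1)
    fun ζ _ => stepGenFun_chainA_div_zTheta hθ0 hθ ζ).congr' ?_
  filter_upwards [eventually_ne_atTop 0] with n hn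
  rw [iidProb_Ahat_le_Ahat _ hn, fn, ftilde, ← Real.exp_nat_mul, mul_neg, neg_mul]
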